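/- If F is a QEF with power β for a model closed under joint convex combinations, then the QEF inequality is preserved under convex combinations of states: if the QEF inequality holds at each ρ_i(c,z) then it holds at Σ_i λ_i ρ_i(c,z) for any convex weights λ_i, as a consequence of joint convexity of the sandwiched Rényi power (τ,σ) ↦ R_α(τ|σ). -/

import Mathlib

open scoped Matrix BigOperators Classical ComplexOrder

noncomputable section

/-- Real part of the trace of a complex matrix. -/
def rtr {d : ℕ} (M : Matrix (Fin d) (Fin d) ℂ) : ℝ := (Matrix.trace M).re

/-- Functional calculus applied to a matrix (junk value `0` if the matrix is not Hermitian). -/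
def mfun {d : ℕ} (f : ℝ → ℝ) (A : Matrix (Fin d) (Fin d) ℂ) : Matrix (Fin d) (Fin d) ℂ :=
  if h : A.IsHermitian then h.cfc f else 0

/-- Positive part `[A]₊` of a Hermitian matrix. -/
def posPartM {d : ℕ} (A : Matrix (Fin d) (Fin d) ℂ) : Matrix (Fin d) (Fin d) ℂ :=
  mfun (fun x => max x 0) A

/-- Projector onto the support of the positive part of a Hermitian matrix. -/
def posSuppProj {d : ℕ} (A : Matrix (Fin d) (Fin d) ℂ) : Matrix (Fin d) (Fin d) ℂ :=
  mfun (fun x => if 0 < x then 1 else 0) A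

/-- Operator absolute value of a Hermitian matrix. -/
def absM {d : ℕ} (A : Matrix (Fin d) (Fin d) ℂ) : Matrix (Fin d) (Fin d) ℂ :=
  mfun (fun x => |x|) A

/-- Moore–Penrose (relative) power of a Hermitian matrix: `x ↦ x ^ p` on the support,
`0` on the kernel. -/
def mpow {d : ℕ} (A : Matrix (Fin d) (Fin d) ℂ) (p : ℝ) : Matrix (Fin d) (Fin d) ℂ :=
  mfun (fun x => if x = 0 then 0 else x ^ p) A

/-- Support containment: the kernel of `σ` is contained in the kernel of `ρ`,
i.e. `supp ρ ⊆ supp σ` for positive semidefinite matrices. -/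
def suppSubset {d : ℕ} (ρ σ : Matrix (Fin d) (Fin d) ℂ) : Prop :=
  ∀ v : Fin d → ℂ, σ.mulVec v = 0 → ρ.mulVec v = 0

/-- Sandwiched Rényi power `R_α(ρ|σ) = tr((σ^{-β/(2α)} ρ σ^{-β/(2α)})^α)`, `β = α - 1`. -/
def sandR {d : ℕ} (α : ℝ) (ρ σ : Matrix (Fin d) (Fin d) ℂ) : ℝ :=
  rtr (mpow (mpow σ (-(α - 1) / (2 * α)) * ρ * mpow σ (-(α - 1) / (2 * α))) α)

/-- Petz Rényi power `tr(ρ^α σ^{-β})`, `β = α - 1`. -/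
def petzR {d : ℕ} (α : ℝ) (ρ σ : Matrix (Fin d) (Fin d) ℂ) : ℝ :=
  rtr (mpow ρ α * mpow σ (-(α - 1)))


/-! ### Spectral preliminaries -/

/-- Eigenvector matrix. -/
def eU {d : ℕ} {A : Matrix (Fin d) (Fin d) ℂ} (hA : A.IsHermitian) : Matrix (Fin d) (Fin d) ℂ :=
  (hA.eigenvectorUnitary : Matrix (Fin d) (Fin d) ℂ)

lemma eU_left {d : ℕ} {A : Matrix (Fin d) (Fin d) ℂ} (hA : A.IsHermitian) :
    (eU hA)ᴴ * eU hA = 1 := by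
  have := Unitary.coe_star_mul_self hA.eigenvectorUnitary
  rwa [Matrix.star_eq_conjTranspose] at this

lemma eU_right {d : ℕ} {A : Matrix (Fin d) (Fin d) ℂ} (hA : A.IsHermitian) :
    eU hA * (eU hA)ᴴ = 1 := by
  have := Unitary.coe_mul_star_self hA.eigenvectorUnitary
  exact this

lemma mfun_eq {d : ℕ} {A : Matrix (Fin d) (Fin d) ℂ} (hA : A.IsHermitian) (f : ℝ → ℝ) :
    mfun f A = eU hA * Matrix.diagonal (fun j => ((f (hA.eigenvalues j) : ℝ) : ℂ)) * (eU hA)ᴴ := by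
  unfold mfun
  rw [dif_pos hA]
  unfold Matrix.IsHermitian.cfc
  rw [Unitary.conjStarAlgAut_apply]
  rfl

lemma mfun_cfc {d : ℕ} {A : Matrix (Fin d) (Fin d) ℂ} (hA : A.IsHermitian) (f : ℝ → ℝ) :
    mfun f A = cfc f A := by
  unfold mfun
  rw [dif_pos hA, hA.cfc_eq]

lemma mfun_id {d : ℕ} {A : Matrix (Fin d) (Fin d) ℂ} (hA : A.IsHermitian) :
    mfun (fun x => x) A = A := by
  rw [mfun_cfc hA]
  exact cfc_id' ℝ A hA

lemma mfun_one {d : ℕ} {A : Matrix (Fin d) (Fin d) ℂ} (hA : A.IsHermitian) :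
    mfun (fun _ => 1) A = 1 := by
  rw [mfun_eq hA]
  simp [eU_right]

lemma mfun_mul {d : ℕ} {A : Matrix (Fin d) (Fin d) ℂ} (hA : A.IsHermitian) (f g : ℝ → ℝ) :
    mfun f A * mfun g A = mfun (fun x => f x * g x) A := by
  rw [mfun_eq hA, mfun_eq hA, mfun_eq hA]
  set U := eU hA with hU
  have h : Uᴴ * U = 1 := eU_left hA
  calc _ = U * Matrix.diagonal (fun j => ((f (hA.eigenvalues j) : ℝ) : ℂ)) * (Uᴴ * U) *
        Matrix.diagonal (fun j => ((g (hA.eigenvalues j) : ℝ) : ℂ)) * Uᴴ := by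
          simp only [Matrix.mul_assoc]
    _ = _ := by
      rw [h, Matrix.mul_one, Matrix.mul_assoc U, Matrix.diagonal_mul_diagonal]
      simp

lemma mfun_herm {d : ℕ} {A : Matrix (Fin d) (Fin d) ℂ} (hA : A.IsHermitian) (f : ℝ → ℝ) :
    (mfun f A).IsHermitian := by
  rw [mfun_eq hA]
  apply Matrix.isHermitian_mul_mul_conjTranspose
  rw [Matrix.isHermitian_diagonal_iff]
  intro i
  simp [IsSelfAdjoint]

lemma mfun_congr {d : ℕ} {A : Matrix (Fin d) (Fin d) ℂ} (hA : A.PosSemidef) {f g : ℝ → ℝ}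
    (h : ∀ x, 0 ≤ x → f x = g x) : mfun f A = mfun g A := by
  rw [mfun_eq hA.1, mfun_eq hA.1]
  congr 3
  funext j
  rw [h _ (hA.eigenvalues_nonneg j)]

lemma mfun_psd {d : ℕ} {A : Matrix (Fin d) (Fin d) ℂ} (hA : A.PosSemidef) (f : ℝ → ℝ)
    (hf : ∀ x, 0 ≤ x → 0 ≤ f x) : (mfun f A).PosSemidef := by
  rw [mfun_eq hA.1]
  apply Matrix.PosSemidef.mul_mul_conjTranspose_same
  rw [Matrix.posSemidef_diagonal_iff]
  intro i
  exact_mod_cast hf _ (hA.eigenvalues_nonneg i)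

lemma mfun_comp {d : ℕ} {A : Matrix (Fin d) (Fin d) ℂ} (hA : A.IsHermitian) (f g : ℝ → ℝ) :
    mfun g (mfun f A) = mfun (fun x => g (f x)) A := by
  rw [mfun_cfc (mfun_herm hA f), mfun_cfc hA, mfun_cfc hA]
  have hfin : (spectrum ℝ A).Finite := Matrix.finite_real_spectrum
  symm
  exact cfc_comp' g f A (by exact (hfin.image f).continuousOn _) (by exact hfin.continuousOn _) hA

lemma rtr_mfun {d : ℕ} {A : Matrix (Fin d) (Fin d) ℂ} (hA : A.IsHermitian) (f : ℝ → ℝ) :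
    rtr (mfun f A) = (A.charpoly.roots.map (fun z : ℂ => f z.re)).sum := by
  rw [hA.roots_charpoly_eq_eigenvalues, mfun_eq hA, rtr, Matrix.trace_mul_comm, ← Matrix.mul_assoc,
    eU_left, Matrix.one_mul, Matrix.trace_diagonal]
  simp [List.sum_ofFn]

lemma rtr_mfun_swap {d : ℕ} (G : Matrix (Fin d) (Fin d) ℂ) (f : ℝ → ℝ) :
    rtr (mfun f (G * Gᴴ)) = rtr (mfun f (Gᴴ * G)) := by
  rw [rtr_mfun (Matrix.isHermitian_mul_conjTranspose_self G),
    rtr_mfun (Matrix.isHermitian_conjTranspose_mul_self G), Matrix.charpoly_mul_comm]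

/-! ### Trace formula in eigenbases -/

def wt {d : ℕ} {A B : Matrix (Fin d) (Fin d) ℂ} (hA : A.IsHermitian) (hB : B.IsHermitian)
    (K : Matrix (Fin d) (Fin d) ℂ) (j k : Fin d) : ℝ :=
  Complex.normSq (((eU hA)ᴴ * K * eU hB) j k)

lemma wt_nonneg {d : ℕ} {A B : Matrix (Fin d) (Fin d) ℂ} (hA : A.IsHermitian) (hB : B.IsHermitian)
    (K : Matrix (Fin d) (Fin d) ℂ) (j k : Fin d) : 0 ≤ wt hA hB K j k := Complex.normSq_nonneg _

lemma rtr_wt {d : ℕ} {A B : Matrix (Fin d) (Fin d) ℂ} (hA : A.IsHermitian) (hB : B.IsHermitian)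
    (K : Matrix (Fin d) (Fin d) ℂ) (f g : ℝ → ℝ) :
    rtr (Kᴴ * mfun f A * K * mfun g B) =
      ∑ k, ∑ j, f (hA.eigenvalues j) * g (hB.eigenvalues k) * wt hA hB K j k := by
  rw [mfun_eq hA, mfun_eq hB]
  unfold wt
  set U := eU hA
  set V := eU hB
  set D := Matrix.diagonal (fun j => ((f (hA.eigenvalues j) : ℝ) : ℂ)) with hD
  set E := Matrix.diagonal (fun j => ((g (hB.eigenvalues j) : ℝ) : ℂ)) with hE
  have h1 : Matrix.trace (Kᴴ * (U * D * Uᴴ) * K * (V * E * Vᴴ)) =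
      Matrix.trace ((Uᴴ * K * V)ᴴ * (D * (Uᴴ * K * V) * E)) := by
    have : Kᴴ * (U * D * Uᴴ) * K * (V * E * Vᴴ) = (Kᴴ * (U * D * Uᴴ) * K * (V * E)) * Vᴴ := by
      simp only [Matrix.mul_assoc]
    rw [this, Matrix.trace_mul_comm]
    simp only [Matrix.conjTranspose_mul, Matrix.conjTranspose_conjTranspose, Matrix.mul_assoc]
  unfold rtr
  rw [h1]
  set L := Uᴴ * K * V
  simp only [Matrix.trace, Matrix.diag, Matrix.mul_apply (M := Lᴴ), Complex.re_sum]
  refine Finset.sum_congr rfl fun k _ => Finset.sum_congr rfl fun j _ => ?_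
  rw [hE, Matrix.mul_diagonal, hD, Matrix.diagonal_mul, Matrix.conjTranspose_apply]
  simp [Complex.normSq_apply]
  ring

lemma exists_W {d : ℕ} {A B : Matrix (Fin d) (Fin d) ℂ} (hA : A.IsHermitian) (hB : B.IsHermitian)
    (K : Matrix (Fin d) (Fin d) ℂ) (c : Fin d → Fin d → ℝ) :
    ∃ W, ∀ j k, wt hA hB W j k = c j k ^ 2 * wt hA hB K j k ∧
      wt hA hB (K - W) j k = (1 - c j k) ^ 2 * wt hA hB K j k := by
  let L := (eU hA)ᴴ * K * eU hB
  let M : Matrix (Fin d) (Fin d) ℂ := Matrix.of fun j k => (c j k : ℂ) * L j k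
  have hM : (eU hA)ᴴ * (eU hA * M * (eU hB)ᴴ) * eU hB = M := by
    calc _ = ((eU hA)ᴴ * eU hA) * M * ((eU hB)ᴴ * eU hB) := by simp only [Matrix.mul_assoc]
      _ = M := by rw [eU_left, eU_left, Matrix.one_mul, Matrix.mul_one]
  refine ⟨eU hA * M * (eU hB)ᴴ, fun j k => ⟨?_, ?_⟩⟩
  · unfold wt
    rw [hM]
    simp [M, L, Complex.normSq_mul, sq]
  · unfold wt
    rw [Matrix.mul_sub, Matrix.sub_mul, hM]
    have : (L - M) j k = ((1 - c j k : ℝ) : ℂ) * L j k := by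
      simp [M]; ring
    change Complex.normSq ((L - M) j k) = _
    rw [this, Complex.normSq_mul, Complex.normSq_ofReal, sq]

/-! ### Young -/

lemma trace_young {d : ℕ} {M X : Matrix (Fin d) (Fin d) ℂ} (hM : M.PosSemidef) (hX : X.PosSemidef)
    (f g u v : ℝ → ℝ) (h : ∀ x y, 0 ≤ x → 0 ≤ y → f x * g y ≤ u x + v y) :
    rtr (mfun f M * mfun g X) ≤ rtr (mfun u M) + rtr (mfun v X) := by
  have e1 := rtr_wt hM.1 hX.1 1 f g
  have e2 := rtr_wt hM.1 hX.1 1 u (fun _ => 1)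
  have e3 := rtr_wt hM.1 hX.1 1 (fun _ => 1) v
  rw [mfun_one hX.1] at e2
  rw [mfun_one hM.1] at e3
  simp only [Matrix.conjTranspose_one, Matrix.one_mul, Matrix.mul_one] at e1 e2 e3
  rw [e1, e2, e3, ← Finset.sum_add_distrib]
  refine Finset.sum_le_sum fun k _ => ?_
  rw [← Finset.sum_add_distrib]
  refine Finset.sum_le_sum fun j _ => ?_
  have := mul_le_mul_of_nonneg_right (h _ _ (hM.eigenvalues_nonneg j) (hX.eigenvalues_nonneg k))
    (wt_nonneg hM.1 hX.1 1 j k)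
  linarith

/-! ### Lieb concavity -/

lemma rtr_add {d : ℕ} (A B : Matrix (Fin d) (Fin d) ℂ) : rtr (A + B) = rtr A + rtr B := by
  simp [rtr]

lemma rtr_wsum {d : ℕ} {ι : Type*} [Fintype ι] (lam : ι → ℝ) (M : ι → Matrix (Fin d) (Fin d) ℂ) :
    rtr (∑ i, ((lam i : ℝ) : ℂ) • M i) = ∑ i, lam i * rtr (M i) := by
  simp [rtr, Matrix.trace_sum]

lemma rtr_comm {d : ℕ} (A B : Matrix (Fin d) (Fin d) ℂ) : rtr (A * B) = rtr (B * A) := by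
  unfold rtr
  rw [Matrix.trace_mul_comm]

lemma psd_wsum {d : ℕ} {ι : Type*} [Fintype ι] (lam : ι → ℝ) (hlam : ∀ i, 0 ≤ lam i)
    (M : ι → Matrix (Fin d) (Fin d) ℂ) (hM : ∀ i, (M i).PosSemidef) :
    (∑ i, ((lam i : ℝ) : ℂ) • M i).PosSemidef := by
  apply Matrix.posSemidef_sum
  intro i _
  exact (hM i).smul (by exact_mod_cast hlam i)

/-- The weighted parallel sum kernel. -/
def psk (t a b : ℝ) : ℝ := a * b / (t * b + a)

lemma psk_le {t a b : ℝ} (ht : 0 < t) (ha : 0 ≤ a) (hb : 0 ≤ b) (l w : ℂ) :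
    t * psk t a b * Complex.normSq l ≤ a * Complex.normSq w + t * b * Complex.normSq (l - w) := by
  rcases (add_nonneg (mul_nonneg ht.le hb) ha).eq_or_lt with h | h
  · unfold psk
    rw [← h]
    have := Complex.normSq_nonneg w
    have := Complex.normSq_nonneg (l - w)
    simp only [div_zero, mul_zero, zero_mul]
    positivity
  · have e : t * psk t a b * Complex.normSq l = (t * a * b * Complex.normSq l) / (t * b + a) := by
      unfold psk; ring
    rw [e, div_le_iff₀ h]
    simp only [Complex.normSq_apply, Complex.sub_re, Complex.sub_im]
    nlinarith [sq_nonneg (a * w.re - t * b * (l.re - w.re)),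
      sq_nonneg (a * w.im - t * b * (l.im - w.im))]

lemma psk_eq {t a b : ℝ} (ht : 0 < t) (ha : 0 ≤ a) (hb : 0 ≤ b) :
    a * (t * b / (t * b + a)) ^ 2 + t * b * (1 - t * b / (t * b + a)) ^ 2 = t * psk t a b := by
  unfold psk
  rcases (add_nonneg (mul_nonneg ht.le hb) ha).eq_or_lt with h | h
  · have h1 : t * b = 0 := le_antisymm (by linarith) (by positivity)
    have h2 : a = 0 := by linarith
    simp [h1, h2]
  · have := h.ne'
    field_simp
    ring

/-- Quadratic form of the parallel sum. -/
def pS {d : ℕ} {A B : Matrix (Fin d) (Fin d) ℂ} (hA : A.IsHermitian) (hB : B.IsHermitian)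
    (K : Matrix (Fin d) (Fin d) ℂ) (t : ℝ) : ℝ :=
  ∑ k, ∑ j, psk t (hA.eigenvalues j) (hB.eigenvalues k) * wt hA hB K j k

lemma energy_eq {d : ℕ} {A B : Matrix (Fin d) (Fin d) ℂ} (hA : A.IsHermitian) (hB : B.IsHermitian)
    (K W : Matrix (Fin d) (Fin d) ℂ) (t : ℝ) :
    rtr (Wᴴ * A * W) + t * rtr ((K - W)ᴴ * (K - W) * B) =
     ∑ k, ∑ j, (hA.eigenvalues j * wt hA hB W j k
        + t * hB.eigenvalues k * wt hA hB (K - W) j k) := by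
  have e2 := rtr_wt hA hB W (fun x => x) (fun _ => 1)
  have e3 := rtr_wt hA hB (K - W) (fun _ => 1) (fun x => x)
  rw [mfun_one hB, mfun_id hA, Matrix.mul_one] at e2
  rw [mfun_one hA, mfun_id hB, Matrix.mul_one] at e3
  rw [e2, e3, Finset.mul_sum, ← Finset.sum_add_distrib]
  refine Finset.sum_congr rfl fun k _ => ?_
  rw [Finset.mul_sum, ← Finset.sum_add_distrib]
  refine Finset.sum_congr rfl fun j _ => ?_
  ring

lemma pS_le {d : ℕ} {A B : Matrix (Fin d) (Fin d) ℂ} (hA : A.PosSemidef) (hB : B.PosSemidef)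
    (K W : Matrix (Fin d) (Fin d) ℂ) {t : ℝ} (ht : 0 < t) :
    t * pS hA.1 hB.1 K t ≤ rtr (Wᴴ * A * W) + t * rtr ((K - W)ᴴ * (K - W) * B) := by
  rw [energy_eq hA.1 hB.1, pS, Finset.mul_sum]
  refine Finset.sum_le_sum fun k _ => ?_
  rw [Finset.mul_sum]
  refine Finset.sum_le_sum fun j _ => ?_
  have := psk_le ht (hA.eigenvalues_nonneg j) (hB.eigenvalues_nonneg k)
    (((eU hA.1)ᴴ * K * eU hB.1) j k) (((eU hA.1)ᴴ * W * eU hB.1) j k)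
  unfold wt
  rw [Matrix.mul_sub, Matrix.sub_mul, Matrix.sub_apply, ← mul_assoc]
  exact this

lemma pS_eq {d : ℕ} {A B : Matrix (Fin d) (Fin d) ℂ} (hA : A.PosSemidef) (hB : B.PosSemidef)
    (K : Matrix (Fin d) (Fin d) ℂ) {t : ℝ} (ht : 0 < t) :
    ∃ W, rtr (Wᴴ * A * W) + t * rtr ((K - W)ᴴ * (K - W) * B) = t * pS hA.1 hB.1 K t := by
  obtain ⟨W, hW⟩ := exists_W hA.1 hB.1 K (fun j k => t * hB.1.eigenvalues k /
    (t * hB.1.eigenvalues k + hA.1.eigenvalues j))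
  refine ⟨W, ?_⟩
  rw [energy_eq hA.1 hB.1, pS, Finset.mul_sum]
  refine Finset.sum_congr rfl fun k _ => ?_
  rw [Finset.mul_sum]
  refine Finset.sum_congr rfl fun j _ => ?_
  rw [(hW j k).1, (hW j k).2, ← mul_assoc t, ← psk_eq ht (hA.eigenvalues_nonneg j)
    (hB.eigenvalues_nonneg k)]
  ring

lemma pS_concave {d : ℕ} {ι : Type*} [Fintype ι] (lam : ι → ℝ) (hlam : ∀ i, 0 ≤ lam i)
    {A B : ι → Matrix (Fin d) (Fin d) ℂ} (hA : ∀ i, (A i).PosSemidef) (hB : ∀ i, (B i).PosSemidef)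
    (K : Matrix (Fin d) (Fin d) ℂ) {t : ℝ} (ht : 0 < t) :
    ∑ i, lam i * pS (hA i).1 (hB i).1 K t ≤
      pS (psd_wsum lam hlam A hA).1 (psd_wsum lam hlam B hB).1 K t := by
  obtain ⟨W, hW⟩ := pS_eq (psd_wsum lam hlam A hA) (psd_wsum lam hlam B hB) K ht
  refine le_of_mul_le_mul_left ?_ ht
  rw [← hW, Finset.mul_sum, Finset.mul_sum, Finset.mul_sum, Finset.sum_mul]
  simp only [Matrix.mul_smul, Matrix.smul_mul]
  rw [rtr_wsum, rtr_wsum, Finset.mul_sum, ← Finset.sum_add_distrib]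
  refine Finset.sum_le_sum fun i _ => ?_
  have := mul_le_mul_of_nonneg_left (pS_le (hA i) (hB i) K W ht) (hlam i)
  linarith

open MeasureTheory in
lemma geo_integral {p : ℝ} (hp : p ∈ Set.Ioo (0 : ℝ) 1) : ∃ μ : Measure ℝ, ∀ a b : ℝ, 0 ≤ a → 0 ≤ b →
    IntegrableOn (fun t => t ^ (p - 1) * psk t a b) (Set.Ioi 0) μ ∧
      a ^ p * b ^ (1 - p) = ∫ t in Set.Ioi 0, t ^ (p - 1) * psk t a b ∂μ := by
  obtain ⟨μ, hμ⟩ := Real.exists_measure_rpow_eq_integral_rpowIntegrand₀₁ hp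
  refine ⟨μ, fun a b ha hb => ?_⟩
  rcases hb.eq_or_lt with h | h
  · subst h
    have : (1 - p) ≠ 0 := by linarith [hp.2]
    simp [psk, Real.zero_rpow this]
  · obtain ⟨h1, h2⟩ := hμ (a / b) (div_nonneg ha hb)
    have key : Set.EqOn (fun t => b * Real.rpowIntegrand₀₁ p t (a / b))
        (fun t => t ^ (p - 1) * psk t a b) (Set.Ioi 0) := by
      intro t ht
      have ht' : 0 < t := ht
      simp only
      rw [Real.rpowIntegrand₀₁_eq_pow_div hp ht'.le (div_nonneg ha hb)]
      unfold psk
      have : t * b + a ≠ 0 := by positivity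
      have : t + a / b ≠ 0 := by positivity
      field_simp
    constructor
    · exact (IntegrableOn.congr_fun (h1.const_mul b) key measurableSet_Ioi)
    · rw [← setIntegral_congr_fun measurableSet_Ioi key, integral_const_mul, ← h2,
        Real.div_rpow ha hb, Real.rpow_sub h, Real.rpow_one]
      ring

lemma mpow_eq {d : ℕ} (A : Matrix (Fin d) (Fin d) ℂ) {p : ℝ} (hp : p ≠ 0) :
    mpow A p = mfun (fun x => x ^ p) A := by
  unfold mpow
  congr 1
  funext x
  split_ifs with h
  · rw [h, Real.zero_rpow hp]
  · rfl

open MeasureTheory in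
lemma lieb {d : ℕ} {ι : Type*} [Fintype ι] (lam : ι → ℝ) (hlam : ∀ i, 0 ≤ lam i)
    {A B : ι → Matrix (Fin d) (Fin d) ℂ} (hA : ∀ i, (A i).PosSemidef) (hB : ∀ i, (B i).PosSemidef)
    (K : Matrix (Fin d) (Fin d) ℂ) {p : ℝ} (hp : p ∈ Set.Ioo (0 : ℝ) 1) :
    ∑ i, lam i * rtr (Kᴴ * mfun (fun x => x ^ p) (A i) * K * mfun (fun x => x ^ (1 - p)) (B i)) ≤
      rtr (Kᴴ * mfun (fun x => x ^ p) (∑ i, ((lam i : ℝ) : ℂ) • A i) * K *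
        mfun (fun x => x ^ (1 - p)) (∑ i, ((lam i : ℝ) : ℂ) • B i)) := by
  obtain ⟨μ, hμ⟩ := geo_integral hp
  have key : ∀ {A B : Matrix (Fin d) (Fin d) ℂ} (hA : A.PosSemidef) (hB : B.PosSemidef),
      IntegrableOn (fun t => t ^ (p - 1) * pS hA.1 hB.1 K t) (Set.Ioi 0) μ ∧
      rtr (Kᴴ * mfun (fun x => x ^ p) A * K * mfun (fun x => x ^ (1 - p)) B) =
        ∫ t in Set.Ioi 0, t ^ (p - 1) * pS hA.1 hB.1 K t ∂μ := by
    intro A B hA hB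
    have e : (fun t => t ^ (p - 1) * pS hA.1 hB.1 K t) = fun t => ∑ k, ∑ j,
        (t ^ (p - 1) * psk t (hA.1.eigenvalues j) (hB.1.eigenvalues k)) * wt hA.1 hB.1 K j k := by
      funext t
      unfold pS
      simp only [Finset.mul_sum, mul_assoc]
    have hIntg : ∀ k j, Integrable (fun t => (t ^ (p - 1) * psk t (hA.1.eigenvalues j)
        (hB.1.eigenvalues k)) * wt hA.1 hB.1 K j k) (μ.restrict (Set.Ioi 0)) := fun k j =>
      (hμ _ _ (hA.eigenvalues_nonneg j) (hB.eigenvalues_nonneg k)).1.mul_const _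
    rw [e]
    constructor
    · exact integrable_finsetSum _ fun k _ => integrable_finsetSum _ fun j _ => hIntg k j
    · rw [rtr_wt hA.1 hB.1, integral_finsetSum _ fun k _ => integrable_finsetSum _ fun j _ => hIntg k j]
      refine Finset.sum_congr rfl fun k _ => ?_
      rw [integral_finsetSum _ fun j _ => hIntg k j]
      refine Finset.sum_congr rfl fun j _ => ?_
      rw [integral_mul_const, (hμ _ _ (hA.eigenvalues_nonneg j) (hB.eigenvalues_nonneg k)).2]
  have hAs := psd_wsum lam hlam A hA
  have hBs := psd_wsum lam hlam B hB
  rw [(key hAs hBs).2]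
  simp only [fun i => (key (hA i) (hB i)).2, ← integral_const_mul]
  rw [← integral_finsetSum _ fun i _ => (key (hA i) (hB i)).1.const_mul _]
  refine setIntegral_mono_on (integrable_finsetSum _ fun i _ => (key (hA i) (hB i)).1.const_mul _)
    (key hAs hBs).1 measurableSet_Ioi fun t ht => ?_
  have ht' : 0 < t := ht
  have := mul_le_mul_of_nonneg_left (pS_concave lam hlam hA hB K ht')
    (Real.rpow_nonneg ht'.le (p - 1))
  refine le_trans (le_of_eq ?_) this
  rw [Finset.mul_sum]
  exact Finset.sum_congr rfl fun i _ => by ring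

/-! ### Epstein concavity -/

lemma rtr_mfun_const_mul {d : ℕ} {A : Matrix (Fin d) (Fin d) ℂ} (hA : A.IsHermitian) (c : ℝ)
    (f : ℝ → ℝ) : rtr (mfun (fun x => c * f x) A) = c * rtr (mfun f A) := by
  rw [rtr_mfun hA, rtr_mfun hA, Multiset.sum_map_mul_left]

lemma epstein {d : ℕ} {ι : Type*} [Fintype ι] (lam : ι → ℝ) (hlam : ∀ i, 0 ≤ lam i)
    {A : ι → Matrix (Fin d) (Fin d) ℂ} (hA : ∀ i, (A i).PosSemidef)
    (K : Matrix (Fin d) (Fin d) ℂ) {p : ℝ} (hp : p ∈ Set.Ioo (0 : ℝ) 1) :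
    ∑ i, lam i * rtr (mfun (fun x => x ^ (1 / p)) (Kᴴ * mfun (fun x => x ^ p) (A i) * K)) ≤
      rtr (mfun (fun x => x ^ (1 / p))
        (Kᴴ * mfun (fun x => x ^ p) (∑ i, ((lam i : ℝ) : ℂ) • A i) * K)) := by
  obtain ⟨hp0, hp1⟩ := hp
  have hpsd : ∀ {A : Matrix (Fin d) (Fin d) ℂ}, A.PosSemidef →
      (Kᴴ * mfun (fun x => x ^ p) A * K).PosSemidef := fun hA =>
    (mfun_psd hA _ fun x hx => Real.rpow_nonneg hx p).conjTranspose_mul_mul_same K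
  have hNs := hpsd (psd_wsum lam hlam A hA)
  set N := fun i => Kᴴ * mfun (fun x => x ^ p) (A i) * K with hNdef
  have hN : ∀ i, (N i).PosSemidef := fun i => hpsd (hA i)
  set Y := fun i => mfun (fun x => x ^ (1 / p)) (N i) with hYdef
  have hY : ∀ i, (Y i).PosSemidef := fun i =>
    mfun_psd (hN i) _ fun x hx => Real.rpow_nonneg hx _
  have hYs := psd_wsum lam hlam Y hY
  have h1 := lieb lam hlam hA hY K ⟨hp0, hp1⟩
  have h2 : ∀ i, Kᴴ * mfun (fun x => x ^ p) (A i) * K * mfun (fun x => x ^ (1 - p)) (Y i) = Y i := by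
    intro i
    change N i * mfun (fun x => x ^ (1 - p)) (mfun (fun x => x ^ (1 / p)) (N i)) =
      mfun (fun x => x ^ (1 / p)) (N i)
    rw [mfun_comp (hN i).1]
    rw [show N i * mfun (fun x => (x ^ (1 / p)) ^ (1 - p)) (N i) = mfun (fun x => x) (N i) *
      mfun (fun x => (x ^ (1 / p)) ^ (1 - p)) (N i) by rw [mfun_id (hN i).1], mfun_mul (hN i).1]
    refine mfun_congr (hN i) fun x hx => ?_
    rcases hx.eq_or_lt with h | h
    · rw [← h, zero_mul, Real.zero_rpow (by positivity)]
    · rw [← Real.rpow_mul hx]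
      nth_rewrite 1 [← Real.rpow_one x]
      rw [← Real.rpow_add h]
      congr 1
      field_simp
      ring
  simp only [h2] at h1
  have h3 := trace_young hNs hYs (fun x => x) (fun y => y ^ (1 - p)) (fun x => p * x ^ (1 / p))
    (fun y => (1 - p) * y) (fun x y hx hy => by
      have := Real.geom_mean_le_arith_mean2_weighted hp0.le (by linarith : (0 : ℝ) ≤ 1 - p)
        (Real.rpow_nonneg hx (1 / p)) hy (by ring)
      rw [← Real.rpow_mul hx, one_div_mul_cancel hp0.ne', Real.rpow_one] at this
      exact this)
  rw [mfun_id hNs.1, rtr_mfun_const_mul hNs.1, rtr_mfun_const_mul hYs.1, mfun_id hYs.1,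
    rtr_wsum] at h3
  have h4 := h1.trans h3
  change ∑ i, lam i * rtr (Y i) ≤ _
  refine le_of_mul_le_mul_left ?_ hp0
  linarith

/-! ### Joint convexity of the sandwiched power -/

lemma supp_mul {d : ℕ} {ρ σ : Matrix (Fin d) (Fin d) ℂ} (hρ : ρ.PosSemidef)
    (h : (σ - ρ).PosSemidef) {P : Matrix (Fin d) (Fin d) ℂ} (hP : σ * P = σ) : ρ * P = ρ := by
  have hk : ∀ v : Fin d → ℂ, σ.mulVec v = 0 → ρ.mulVec v = 0 := by
    intro v hv
    rw [← hρ.dotProduct_mulVec_zero_iff]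
    have h1 := h.dotProduct_mulVec_nonneg v
    have h2 := hρ.dotProduct_mulVec_nonneg v
    rw [Matrix.sub_mulVec, hv, zero_sub, dotProduct_neg] at h1
    exact le_antisymm (neg_nonneg.mp h1) h2
  have h0 : ρ * (P - 1) = 0 := by
    apply Matrix.ext_of_mulVec_single
    intro i
    rw [← Matrix.mulVec_mulVec, Matrix.zero_mulVec]
    apply hk
    rw [Matrix.mulVec_mulVec, Matrix.mul_sub, hP, Matrix.mul_one, sub_self, Matrix.zero_mulVec]
  rw [Matrix.mul_sub, Matrix.mul_one] at h0
  exact sub_eq_zero.mp h0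

lemma sand_convex {d : ℕ} {ι : Type*} [Fintype ι] {α : ℝ} (hα : 1 < α)
    (lam : ι → ℝ) (hlam : ∀ i, 0 ≤ lam i)
    {ρ σ : ι → Matrix (Fin d) (Fin d) ℂ} (hρ : ∀ i, (ρ i).PosSemidef) (hσ : ∀ i, (σ i).PosSemidef)
    (hle : ∀ i, (σ i - ρ i).PosSemidef) :
    sandR α (∑ i, ((lam i : ℝ) : ℂ) • ρ i) (∑ i, ((lam i : ℝ) : ℂ) • σ i) ≤
      ∑ i, lam i * sandR α (ρ i) (σ i) := by
  have hα0 : 0 < α := by linarith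
  have hβ : 0 < α - 1 := by linarith
  obtain ⟨s, hs⟩ : ∃ s, s = (α - 1) / (2 * α) := ⟨_, rfl⟩
  have hs0 : 0 < s := by rw [hs]; positivity
  have hs' : -(α - 1) / (2 * α) = -s := by rw [hs]; ring
  have hp : 2 * s ∈ Set.Ioo (0 : ℝ) 1 := by
    refine ⟨by positivity, ?_⟩
    rw [hs, show 2 * ((α - 1) / (2 * α)) = (α - 1) / α by field_simp, div_lt_one hα0]
    linarith
  have hq : 1 / (2 * s) = α / (α - 1) := by
    rw [hs]; field_simp
  have hαn : α ≠ 0 := hα0.ne'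
  unfold sandR
  rw [hs']
  simp only [mpow_eq _ hαn]
  have hXpsd : ∀ {ρ σ : Matrix (Fin d) (Fin d) ℂ}, ρ.PosSemidef → σ.PosSemidef →
      (mpow σ (-s) * ρ * mpow σ (-s)).PosSemidef := by
    intro ρ σ hρ hσ
    have := hρ.conjTranspose_mul_mul_same (mpow σ (-s))
    rwa [show (mpow σ (-s))ᴴ = mpow σ (-s) from mfun_herm hσ.1 _] at this
  have hρs := psd_wsum lam hlam ρ hρ
  have hσs := psd_wsum lam hlam σ hσ
  have hX := hXpsd hρs hσs
  have hmn : (mpow (∑ i, ((lam i : ℝ) : ℂ) • σ i) (-s)).IsHermitian := mfun_herm hσs.1 _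
  set ρ' := ∑ i, ((lam i : ℝ) : ℂ) • ρ i with hρ'
  set σ' := ∑ i, ((lam i : ℝ) : ℂ) • σ i with hσ'
  set X := mpow σ' (-s) * ρ' * mpow σ' (-s) with hXdef
  set V := mfun (fun x => x ^ ((α - 1) / 2)) X with hV
  have hVh : V.IsHermitian := mfun_herm hX.1 _
  set K := mpow σ' (-s) * V with hK
  have hKh : Kᴴ = V * mpow σ' (-s) := by
    rw [hK, Matrix.conjTranspose_mul, hVh.eq, hmn.eq]
  have hVV : V * V = mfun (fun x => x ^ (α - 1)) X := by
    rw [hV, mfun_mul hX.1]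
    refine mfun_congr hX fun x hx => ?_
    rw [← Real.rpow_add_of_nonneg hx (by positivity) (by positivity)]
    congr 1
    ring
  have h1 : rtr (Kᴴ * ρ' * K) = rtr (mfun (fun x => x ^ α) X) := by
    have e : Kᴴ * ρ' * K = V * X * V := by
      rw [hKh, hK, hXdef]
      simp only [Matrix.mul_assoc]
    rw [e, rtr_comm, ← Matrix.mul_assoc, hVV]
    nth_rewrite 2 [← mfun_id hX.1]
    rw [mfun_mul hX.1]
    congr 1
    refine mfun_congr hX fun x hx => ?_
    nth_rewrite 2 [← Real.rpow_one x]
    rw [← Real.rpow_add_of_nonneg hx hβ.le zero_le_one]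
    congr 1
    ring
  have h2 : Kᴴ * mfun (fun x => x ^ (2 * s)) σ' * K = mfun (fun x => x ^ (α - 1)) X := by
    rw [hKh, hK, ← hVV]
    have hP : mpow σ' (-s) * mfun (fun x => x ^ (2 * s)) σ' * mpow σ' (-s) * mpow σ' (-s) =
        mpow σ' (-s) := by
      unfold mpow
      rw [mfun_mul hσs.1, mfun_mul hσs.1, mfun_mul hσs.1]
      refine mfun_congr hσs fun x hx => ?_
      rcases hx.eq_or_lt with h | h
      · simp [← h]
      · simp only [h.ne', if_false]
        rw [← Real.rpow_add h, ← Real.rpow_add h, ← Real.rpow_add h]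
        congr 1
        ring
    have hPX : mpow σ' (-s) * mfun (fun x => x ^ (2 * s)) σ' * mpow σ' (-s) * X = X := by
      rw [hXdef]
      nth_rewrite 5 [← hP]
      simp only [Matrix.mul_assoc]
    have hVX : V = X * mfun (fun x => if x = 0 then 0 else x ^ ((α - 1) / 2 - 1)) X := by
      nth_rewrite 1 [← mfun_id hX.1]
      rw [mfun_mul hX.1]
      refine mfun_congr hX fun x hx => ?_
      rcases hx.eq_or_lt with h | h
      · simp only [← h, if_true, mul_zero]
        exact Real.zero_rpow (by positivity)
      · simp only [h.ne', if_false]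
        nth_rewrite 2 [← Real.rpow_one x]
        rw [← Real.rpow_add h]
        congr 1
        ring
    have hPV : mpow σ' (-s) * mfun (fun x => x ^ (2 * s)) σ' * mpow σ' (-s) * V = V := by
      rw [hVX, ← Matrix.mul_assoc, hPX]
    calc _ = V * (mpow σ' (-s) * mfun (fun x => x ^ (2 * s)) σ' * mpow σ' (-s) * V) := by
            simp only [Matrix.mul_assoc]
      _ = V * V := by rw [hPV]
  have h3 := epstein lam hlam hσ K hp
  rw [← hσ', h2, hq, mfun_comp hX.1] at h3
  have h3' : mfun (fun x => (x ^ (α - 1)) ^ (α / (α - 1))) X = mfun (fun x => x ^ α) X := by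
    refine mfun_congr hX fun x hx => ?_
    rw [← Real.rpow_mul hx]
    congr 1
    field_simp
  rw [h3'] at h3
  have h4 : ∀ i, α * rtr (Kᴴ * ρ i * K) ≤
      rtr (mfun (fun x => x ^ α) (mpow (σ i) (-s) * ρ i * mpow (σ i) (-s))) +
      (α - 1) * rtr (mfun (fun x => x ^ (α / (α - 1)))
        (Kᴴ * mfun (fun x => x ^ (2 * s)) (σ i) * K)) := by
    intro i
    have hXi := hXpsd (hρ i) (hσ i)
    set T := mfun (fun x => x ^ s) (σ i) with hT
    have hTh : T.IsHermitian := mfun_herm (hσ i).1 _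
    have hTT : T * T = mfun (fun x => x ^ (2 * s)) (σ i) := by
      rw [hT, mfun_mul (hσ i).1]
      refine mfun_congr (hσ i) fun x hx => ?_
      rw [← Real.rpow_add_of_nonneg hx hs0.le hs0.le]
      congr 1
      ring
    set P := mpow (σ i) (-s) * T with hP
    have hTP : T * mpow (σ i) (-s) = P := by
      rw [hP, hT, mpow, mfun_mul (hσ i).1, mfun_mul (hσ i).1]
      congr 1
      funext x
      ring
    have hPh : Pᴴ = P := by
      rw [hP, Matrix.conjTranspose_mul, hTh.eq,
        show (mpow (σ i) (-s))ᴴ = mpow (σ i) (-s) from mfun_herm (hσ i).1 _, hTP]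
    have hσP : σ i * P = σ i := by
      rw [hP, hT, mpow, mfun_mul (hσ i).1]
      nth_rewrite 1 [← mfun_id (hσ i).1]
      rw [mfun_mul (hσ i).1]
      nth_rewrite 2 [← mfun_id (hσ i).1]
      refine mfun_congr (hσ i) fun x hx => ?_
      rcases hx.eq_or_lt with h | h
      · simp [← h]
      · simp only [h.ne', if_false]
        rw [← Real.rpow_add h]
        simp
    have hρP := supp_mul (hρ i) (hle i) hσP
    have hPρ : P * ρ i = ρ i := by
      have := congrArg Matrix.conjTranspose hρP
      rwa [Matrix.conjTranspose_mul, hPh, (hρ i).1.eq] at this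
    set Xi := mpow (σ i) (-s) * ρ i * mpow (σ i) (-s) with hXidef
    have hrec : T * Xi * T = ρ i := by
      calc T * Xi * T = (T * mpow (σ i) (-s)) * ρ i * (mpow (σ i) (-s) * T) := by
            rw [hXidef]; simp only [Matrix.mul_assoc]
        _ = ρ i := by rw [hTP, hPρ, hρP]
    set G := T * K with hG
    have hGh : Gᴴ = Kᴴ * T := by rw [hG, Matrix.conjTranspose_mul, hTh.eq]
    have hGG : Gᴴ * G = Kᴴ * mfun (fun x => x ^ (2 * s)) (σ i) * K := by
      rw [← hTT, hGh, hG]; simp only [Matrix.mul_assoc]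
    have htr : rtr (Kᴴ * ρ i * K) = rtr ((G * Gᴴ) * Xi) := by
      have : Kᴴ * ρ i * K = (Gᴴ * Xi) * G := by
        rw [← hrec, hGh, hG]; simp only [Matrix.mul_assoc]
      rw [this, rtr_comm, ← Matrix.mul_assoc]
    have hM : (G * Gᴴ).PosSemidef := Matrix.posSemidef_self_mul_conjTranspose G
    have hy := trace_young hM hXi (fun x => x) (fun x => x)
      (fun x => (α - 1) / α * x ^ (α / (α - 1))) (fun y => 1 / α * y ^ α) (fun x y hx hy => by
        have hc : (α / (α - 1)).HolderConjugate α := by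
          rw [Real.holderConjugate_iff]
          constructor
          · rw [one_lt_div hβ]; linarith
          · field_simp; ring
        have := Real.young_inequality_of_nonneg hx hy hc
        refine this.trans (le_of_eq ?_)
        field_simp)
    rw [mfun_id hM.1, mfun_id hXi.1, rtr_mfun_const_mul hM.1, rtr_mfun_const_mul hXi.1,
      rtr_mfun_swap, hGG, ← htr] at hy
    have := mul_le_mul_of_nonneg_left hy hα0.le
    refine this.trans (le_of_eq ?_)
    field_simp
    ring
  have h5 : rtr (Kᴴ * ρ' * K) = ∑ i, lam i * rtr (Kᴴ * ρ i * K) := by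
    rw [hρ', Finset.mul_sum, Finset.sum_mul]
    simp only [Matrix.mul_smul, Matrix.smul_mul]
    rw [rtr_wsum]
  have h6 : α * rtr (Kᴴ * ρ' * K) ≤
      ∑ i, lam i * rtr (mfun (fun x => x ^ α) (mpow (σ i) (-s) * ρ i * mpow (σ i) (-s))) +
      (α - 1) * ∑ i, lam i * rtr (mfun (fun x => x ^ (α / (α - 1)))
        (Kᴴ * mfun (fun x => x ^ (2 * s)) (σ i) * K)) := by
    rw [h5, Finset.mul_sum, Finset.mul_sum, ← Finset.sum_add_distrib]
    refine Finset.sum_le_sum fun i _ => ?_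
    have := mul_le_mul_of_nonneg_left (h4 i) (hlam i)
    linarith
  rw [h1] at h6
  have h7 := mul_le_mul_of_nonneg_left h3 hβ.le
  linarith

/-- The QEF inequality is preserved under convex combinations of states, as a
consequence of joint convexity of the sandwiched Rényi power. -/
theorem stmt14 {d : ℕ} {C Z ι : Type*} [Fintype C] [Fintype Z] [Fintype ι]
    (α : ℝ) (hα : 1 < α)
    (F : C × Z → ℝ) (hF : ∀ p, 0 ≤ F p)
    (ρ : ι → (C × Z) → Matrix (Fin d) (Fin d) ℂ)
    (hρ : ∀ i p, (ρ i p).PosSemidef)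
    (lam : ι → ℝ) (hlam : ∀ i, 0 ≤ lam i) (hsum : ∑ i, lam i = 1)
    (hqef : ∀ i, ∑ p, F p * sandR α (ρ i p) (∑ c, ρ i (c, p.2)) ≤ rtr (∑ p, ρ i p)) :
    ∑ p, F p * sandR α (∑ i, ((lam i : ℝ) : ℂ) • ρ i p)
        (∑ c, ∑ i, ((lam i : ℝ) : ℂ) • ρ i (c, p.2))
      ≤ rtr (∑ p, ∑ i, ((lam i : ℝ) : ℂ) • ρ i p) := by
  have hcomm : ∀ z : Z, ∑ c, ∑ i, ((lam i : ℝ) : ℂ) • ρ i (c, z) =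
      ∑ i, ((lam i : ℝ) : ℂ) • ∑ c, ρ i (c, z) := by
    intro z
    rw [Finset.sum_comm]
    simp only [Finset.smul_sum]
  have hconv : ∀ p : C × Z, sandR α (∑ i, ((lam i : ℝ) : ℂ) • ρ i p)
        (∑ c, ∑ i, ((lam i : ℝ) : ℂ) • ρ i (c, p.2)) ≤
      ∑ i, lam i * sandR α (ρ i p) (∑ c, ρ i (c, p.2)) := by
    intro p
    rw [hcomm]
    refine sand_convex hα lam hlam (fun i => hρ i p)
      (fun i => Matrix.posSemidef_sum _ fun c _ => hρ i _) fun i => ?_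
    have : ∑ c, ρ i (c, p.2) - ρ i p = ∑ c ∈ Finset.univ.erase p.1, ρ i (c, p.2) := by
      rw [← Finset.sum_erase_add _ _ (Finset.mem_univ p.1)]
      simp
    rw [this]
    exact Matrix.posSemidef_sum _ fun c _ => hρ i _
  calc _ ≤ ∑ p : C × Z, F p * ∑ i, lam i * sandR α (ρ i p) (∑ c, ρ i (c, p.2)) :=
        Finset.sum_le_sum fun p _ => mul_le_mul_of_nonneg_left (hconv p) (hF p)
    _ = ∑ i, lam i * ∑ p : C × Z, F p * sandR α (ρ i p) (∑ c, ρ i (c, p.2)) := by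
        simp only [Finset.mul_sum]
        rw [Finset.sum_comm]
        exact Finset.sum_congr rfl fun i _ => Finset.sum_congr rfl fun p _ => by ring
    _ ≤ ∑ i, lam i * rtr (∑ p, ρ i p) :=
        Finset.sum_le_sum fun i _ => mul_le_mul_of_nonneg_left (hqef i) (hlam i)
    _ = _ := by
        rw [← rtr_wsum, Finset.sum_comm]
        simp only [Finset.smul_sum]
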